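/- Assume the integral VHI data hypotheses together with: K ⊆ V nonempty, closed and convex; A : V → V* Lipschitz continuous and strongly monotone with constant m_A > 0; Φ : V → ℝ convex and continuous; f ∈ V*; and α_ψ c_Δ² < m_A. Let u ∈ K be the unique solution of the variational-hemivariational inequality ⟨Au, v − u⟩ + Φ(v) − Φ(u) + ∫_Δ ψ⁰(γ_ψ u; γ_ψ v − γ_ψ u) dμ ≥ ⟨f, v − u⟩ for all v ∈ K. Suppose the approximation is internal, i.e., Vʰ ⊆ V is a finite-dimensional subspace and Kʰ ⊆ Vʰ is nonempty, closed, convex with Kʰ ⊆ K, and let uʰ ∈ Kʰ be the unique solution of the corresponding discrete inequality over Kʰ. Define R_u(v, w) := ⟨Au, v − w⟩ + Φ(v) − Φ(w) + ∫_Δ ψ⁰(γ_ψ u; γ_ψ v − γ_ψ w) dμ − ⟨f, v − w⟩. Then there exists a constant c > 0, independent of Vʰ and Kʰ, such that ‖u − uʰ‖_V² ≤ c · inf_{vʰ ∈ Kʰ} [ ‖u − vʰ‖_V² + ‖γ_ψ(u − vʰ)‖_{V_ψ} + R_u(vʰ, u) ]. -/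

import Mathlib

open Filter Topology MeasureTheory RealInnerProductSpace

/-- The Clarke (generalized) directional derivative of `f` at `u` in direction `v`. -/
noncomputable def clarkeDeriv {X : Type*} [NormedAddCommGroup X] [NormedSpace ℝ X]
    (f : X → ℝ) (u v : X) : ℝ :=
  Filter.limsup (fun p : X × ℝ => (f (p.1 + p.2 • v) - f p.1) / p.2)
    ((𝓝 u) ×ˢ 𝓝[>] (0:ℝ))

section ClarkeCalculus

theorem eventually_snd_pos_nhdsGT_zero {Y : Type*} [TopologicalSpace Y] (z : Y) :
    ∀ᶠ p : Y × ℝ in 𝓝 z ×ˢ 𝓝[>] (0 : ℝ), 0 < p.2 :=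
  tendsto_snd.eventually self_mem_nhdsWithin

variable {X : Type*} [NormedAddCommGroup X] [NormedSpace ℝ X]

theorem tendsto_add_smul_nhdsGT_zero (z v : X) :
    Tendsto (fun p : X × ℝ => p.1 + p.2 • v) (𝓝 z ×ˢ 𝓝[>] (0 : ℝ)) (𝓝 z) := by
  have hc : Tendsto (fun p : X × ℝ => p.1 + p.2 • v) (𝓝 (z, (0 : ℝ))) (𝓝 z) := by
    have : Continuous fun p : X × ℝ => p.1 + p.2 • v := by fun_prop
    simpa using this.tendsto (z, (0 : ℝ))
  rw [nhds_prod_eq] at hc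
  exact hc.mono_left (Filter.prod_mono le_rfl nhdsWithin_le_nhds)

theorem LipschitzOnWith.eventually_abs_diffQuotient_le {f : X → ℝ} {L : NNReal} {s : Set X}
    (hf : LipschitzOnWith L f s) {z : X} (hs : s ∈ 𝓝 z) (v : X) :
    ∀ᶠ p : X × ℝ in 𝓝 z ×ˢ 𝓝[>] (0 : ℝ),
      |(f (p.1 + p.2 • v) - f p.1) / p.2| ≤ L * ‖v‖ := by
  filter_upwards [(tendsto_add_smul_nhdsGT_zero z v).eventually hs,
    tendsto_fst.eventually hs, eventually_snd_pos_nhdsGT_zero z] with p h1 h2 hpos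
  have h := hf.dist_le_mul _ h1 _ h2
  rw [Real.dist_eq, dist_eq_norm, add_sub_cancel_left, norm_smul, Real.norm_eq_abs,
    abs_of_pos hpos] at h
  rw [abs_div, abs_of_pos hpos, div_le_iff₀ hpos]
  linarith

variable {f : X → ℝ}

theorem LocallyLipschitz.eventually_diffQuotient_lt (hf : LocallyLipschitz f) {z v : X} {b : ℝ}
    (h : clarkeDeriv f z v < b) :
    ∀ᶠ p : X × ℝ in 𝓝 z ×ˢ 𝓝[>] (0 : ℝ), (f (p.1 + p.2 • v) - f p.1) / p.2 < b := by
  obtain ⟨L, s, hs, hL⟩ := hf z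
  exact eventually_lt_of_limsup_lt h (isBoundedUnder_of_eventually_le
    ((hL.eventually_abs_diffQuotient_le hs v).mono fun p hp => (abs_le.1 hp).2))

theorem LocallyLipschitz.clarkeDeriv_le (hf : LocallyLipschitz f) {z v : X} {b : ℝ}
    (h : ∀ᶠ p : X × ℝ in 𝓝 z ×ˢ 𝓝[>] (0 : ℝ), (f (p.1 + p.2 • v) - f p.1) / p.2 ≤ b) :
    clarkeDeriv f z v ≤ b := by
  obtain ⟨L, s, hs, hL⟩ := hf z
  refine limsup_le_of_le (IsBoundedUnder.isCoboundedUnder_le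
    (isBoundedUnder_of_eventually_ge (a := -(L * ‖v‖)) ?_)) h
  exact (hL.eventually_abs_diffQuotient_le hs v).mono fun p hp => (abs_le.1 hp).1

theorem clarkeDeriv_zero_right (f : X → ℝ) (z : X) : clarkeDeriv f z 0 = 0 := by
  simp [clarkeDeriv]

theorem LocallyLipschitz.clarkeDeriv_add_le (hf : LocallyLipschitz f) (z v w : X) :
    clarkeDeriv f z (v + w) ≤ clarkeDeriv f z v + clarkeDeriv f z w := by
  refine le_of_forall_pos_le_add fun ε hε => hf.clarkeDeriv_le ?_
  have hv := hf.eventually_diffQuotient_lt (lt_add_of_pos_right (clarkeDeriv f z v) (half_pos hε))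
  have hw := hf.eventually_diffQuotient_lt (lt_add_of_pos_right (clarkeDeriv f z w) (half_pos hε))
  have hmap : Tendsto (fun p : X × ℝ => (p.1 + p.2 • v, p.2)) (𝓝 z ×ˢ 𝓝[>] (0 : ℝ))
      (𝓝 z ×ˢ 𝓝[>] (0 : ℝ)) :=
    (tendsto_add_smul_nhdsGT_zero z v).prodMk tendsto_snd
  filter_upwards [hv, hmap.eventually hw] with p h1 h2
  have : (f (p.1 + p.2 • (v + w)) - f p.1) / p.2 =
      (f (p.1 + p.2 • v) - f p.1) / p.2 +
        (f (p.1 + p.2 • v + p.2 • w) - f (p.1 + p.2 • v)) / p.2 := by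
    rw [smul_add, ← add_assoc]; ring
  rw [this]
  linarith

theorem LocallyLipschitz.clarkeDeriv_smul_le (hf : LocallyLipschitz f) (z v : X) {c : ℝ}
    (hc : 0 < c) : clarkeDeriv f z (c • v) ≤ c * clarkeDeriv f z v := by
  rw [← div_le_iff₀' hc]
  refine le_of_forall_gt_imp_ge_of_dense fun b hb => ?_
  rw [div_le_iff₀' hc]
  refine hf.clarkeDeriv_le ?_
  have hcont : Tendsto (fun t : ℝ => c * t) (𝓝[>] 0) (𝓝[>] 0) := by
    refine tendsto_nhdsWithin_iff.2 ⟨?_, ?_⟩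
    · have : Continuous fun t : ℝ => c * t := by fun_prop
      simpa using (this.tendsto 0).mono_left nhdsWithin_le_nhds
    · filter_upwards [self_mem_nhdsWithin] with t ht using mul_pos hc ht
  have hmap : Tendsto (fun p : X × ℝ => (p.1, c * p.2)) (𝓝 z ×ˢ 𝓝[>] (0 : ℝ))
      (𝓝 z ×ˢ 𝓝[>] (0 : ℝ)) :=
    tendsto_fst.prodMk (hcont.comp tendsto_snd)
  filter_upwards [hmap.eventually (hf.eventually_diffQuotient_lt hb),
    eventually_snd_pos_nhdsGT_zero z] with p h hpos
  have : (f (p.1 + p.2 • c • v) - f p.1) / p.2 =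
      c * ((f (p.1 + (c * p.2) • v) - f p.1) / (c * p.2)) := by
    rw [smul_smul, mul_comm p.2 c]
    field_simp
  rw [this]
  exact mul_le_mul_of_nonneg_left h.le hc.le

theorem LocallyLipschitz.clarkeDeriv_smul (hf : LocallyLipschitz f) (z v : X) {c : ℝ}
    (hc : 0 < c) : clarkeDeriv f z (c • v) = c * clarkeDeriv f z v := by
  refine le_antisymm (hf.clarkeDeriv_smul_le z v hc) ?_
  have h := hf.clarkeDeriv_smul_le z (c • v) (inv_pos.2 hc)
  rw [inv_smul_smul₀ hc.ne'] at h
  rwa [← le_inv_mul_iff₀ hc]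

theorem LocallyLipschitz.neg_clarkeDeriv_neg_le (hf : LocallyLipschitz f) (z v : X) :
    -clarkeDeriv f z (-v) ≤ clarkeDeriv f z v := by
  have h := hf.clarkeDeriv_add_le z v (-v)
  rw [add_neg_cancel, clarkeDeriv_zero_right] at h
  linarith

theorem LocallyLipschitz.upperSemicontinuous_clarkeDeriv (hf : LocallyLipschitz f) :
    UpperSemicontinuous fun p : X × X => clarkeDeriv f p.1 p.2 := by
  rintro ⟨z, w⟩ b hb
  obtain ⟨L, s, hs, hL⟩ := hf z
  obtain ⟨b', hb', hbb'⟩ := exists_between hb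
  have h1 : ∀ᶠ z' in 𝓝 z, clarkeDeriv f z' w ≤ b' := by
    obtain ⟨pa, hpa, pb, hpb, hp⟩ := eventually_prod_iff.1 (hf.eventually_diffQuotient_lt hb')
    filter_upwards [hpa.eventually_nhds] with z' hz'
    exact hf.clarkeDeriv_le ((hz'.prod_mk hpb).mono fun p h => (hp h.1 h.2).le)
  have h2 : ∀ᶠ w' in 𝓝 w, b' + L * ‖w' - w‖ < b := by
    have : Continuous fun w' : X => b' + L * ‖w' - w‖ := by fun_prop
    exact this.continuousAt.eventually_lt continuousAt_const (by simpa using hbb')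
  rw [nhds_prod_eq]
  filter_upwards [(h1.and (eventually_mem_nhds_iff.2 hs)).prod_mk h2] with p hp
  obtain ⟨⟨hp1, hps⟩, hp2⟩ := hp
  have hsub := hf.clarkeDeriv_add_le p.1 w (p.2 - w)
  have hlip : clarkeDeriv f p.1 (p.2 - w) ≤ L * ‖p.2 - w‖ :=
    hf.clarkeDeriv_le ((hL.eventually_abs_diffQuotient_le hps _).mono fun q hq => (abs_le.1 hq).2)
  rw [add_sub_cancel] at hsub
  linarith

end ClarkeCalculus

section Subgradient

variable {E : Type*} [NormedAddCommGroup E] [InnerProductSpace ℝ E] [FiniteDimensional ℝ E]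
  {f : E → ℝ}

/-- The Clarke derivative is the support function of the Clarke subdifferential. -/
theorem LocallyLipschitz.exists_subgradient_inner_eq (hf : LocallyLipschitz f) (z : E) {w : E}
    (hw : w ≠ 0) :
    ∃ ξ : E, (∀ v, ⟪ξ, v⟫ ≤ clarkeDeriv f z v) ∧ ⟪ξ, w⟫ = clarkeDeriv f z w := by
  have hdom : ∀ x : (LinearPMap.mkSpanSingleton (K := ℝ) (L := ℝ) (σ := RingHom.id ℝ) w
      (clarkeDeriv f z w) hw).domain,
      LinearPMap.mkSpanSingleton (K := ℝ) (L := ℝ) (σ := RingHom.id ℝ) w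
        (clarkeDeriv f z w) hw x ≤ clarkeDeriv f z x := by
    rintro ⟨x, hx⟩
    obtain ⟨t, rfl⟩ := Submodule.mem_span_singleton.1 hx
    erw [LinearPMap.mkSpanSingleton'_apply]
    simp only [RingHom.id_apply, smul_eq_mul]
    rcases lt_trichotomy t 0 with ht | rfl | ht
    · have h1 := hf.neg_clarkeDeriv_neg_le z (t • w)
      rw [← neg_smul, hf.clarkeDeriv_smul z w (neg_pos.2 ht)] at h1
      linarith
    · simp [clarkeDeriv_zero_right]
    · exact (hf.clarkeDeriv_smul z w ht).ge
  obtain ⟨g, hg, hgle⟩ := exists_extension_of_le_sublinear _ (clarkeDeriv f z)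
    (fun c hc x => hf.clarkeDeriv_smul z x hc) (hf.clarkeDeriv_add_le z) hdom
  refine ⟨(InnerProductSpace.toDual ℝ E).symm (LinearMap.toContinuousLinearMap g), ?_, ?_⟩
  · intro v
    simpa using hgle v
  · have := hg ⟨w, Submodule.mem_span_singleton_self w⟩
    rw [LinearPMap.mkSpanSingleton_apply] at this
    simpa using this

theorem LocallyLipschitz.abs_clarkeDeriv_le_of_subgradient_le (hf : LocallyLipschitz f) {z : E}
    {C : ℝ} (hC : ∀ ξ : E, (∀ w, ⟪ξ, w⟫ ≤ clarkeDeriv f z w) → ‖ξ‖ ≤ C) (w : E) :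
    |clarkeDeriv f z w| ≤ C * ‖w‖ := by
  have upper : ∀ v, clarkeDeriv f z v ≤ C * ‖v‖ := by
    intro v
    rcases eq_or_ne v 0 with rfl | hv
    · simp [clarkeDeriv_zero_right]
    · obtain ⟨ξ, hξ, hξv⟩ := hf.exists_subgradient_inner_eq z hv
      rw [← hξv]
      exact (real_inner_le_norm ξ v).trans
        (mul_le_mul_of_nonneg_right (hC ξ hξ) (norm_nonneg v))
  refine abs_le.2 ⟨?_, upper w⟩
  have h := upper (-w)
  rw [norm_neg] at h
  linarith [hf.neg_clarkeDeriv_neg_le z w]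

end Subgradient

section Integral

variable {Δ : Type*} [MeasurableSpace Δ] {μ : Measure Δ}
  {E : Type*} [NormedAddCommGroup E]

theorem MeasureTheory.L2.integrable_norm_sq (a : Lp E 2 μ) :
    Integrable (fun x => ‖a x‖ ^ 2) μ :=
  (memLp_two_iff_integrable_sq_norm (Lp.aestronglyMeasurable a)).1 (Lp.memLp a)

theorem MeasureTheory.L2.integrable_norm_mul_norm (a b : Lp E 2 μ) :
    Integrable (fun x => ‖a x‖ * ‖b x‖) μ :=
  (Lp.memLp a).norm.integrable_mul (Lp.memLp b).norm

variable [InnerProductSpace ℝ E]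

theorem MeasureTheory.L2.integral_norm_sq_eq (a : Lp E 2 μ) : ∫ x, ‖a x‖ ^ 2 ∂μ = ‖a‖ ^ 2 := by
  rw [← real_inner_self_eq_norm_sq, L2.inner_def]
  simp

theorem MeasureTheory.MemLp.integral_mul_norm_Lp_two_le {g : Δ → ℝ} (hg : MemLp g 2 μ)
    (b : Lp E 2 μ) :
    ∫ x, ‖g x‖ * ‖b x‖ ∂μ ≤ √(∫ x, ‖g x‖ ^ 2 ∂μ) * ‖b‖ := by
  have h := integral_mul_norm_le_Lp_mul_Lq (μ := μ) (f := g) (g := fun x => ‖b x‖)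
    Real.HolderConjugate.two_two (by simpa using hg) (by simpa using (Lp.memLp b).norm)
  simp only [Real.rpow_two, norm_norm, ← Real.sqrt_eq_rpow, L2.integral_norm_sq_eq,
    Real.sqrt_sq (norm_nonneg b)] at h
  exact h

variable [IsFiniteMeasure μ] [FiniteDimensional ℝ E] [MeasurableSpace E] [BorelSpace E]
  {ψ : E → ℝ} {C : ℝ}

theorem LocallyLipschitz.integrable_clarkeDeriv_Lp (hψ : LocallyLipschitz ψ) (hC0 : 0 ≤ C)
    (hC : ∀ z w : E, |clarkeDeriv ψ z w| ≤ C * (1 + ‖z‖) * ‖w‖) (a b c : Lp E 2 μ) :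
    Integrable (fun x => clarkeDeriv ψ (a x) (b x - c x)) μ ∧
      |∫ x, clarkeDeriv ψ (a x) (b x - c x) ∂μ| ≤
        C * (√(μ.real Set.univ) + ‖a‖) * ‖b - c‖ := by
  have hdom : Integrable (fun x => C * (‖(b - c) x‖ + ‖a x‖ * ‖(b - c) x‖)) μ :=
    (((Lp.memLp (b - c)).integrable one_le_two).norm.add
      (L2.integrable_norm_mul_norm a (b - c))).const_mul C
  have hle : ∀ᵐ x ∂μ, ‖clarkeDeriv ψ (a x) (b x - c x)‖ ≤
      C * (‖(b - c) x‖ + ‖a x‖ * ‖(b - c) x‖) := by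
    filter_upwards [Lp.coeFn_sub b c] with x hx
    rw [hx, Pi.sub_apply, Real.norm_eq_abs]
    exact (hC _ _).trans_eq (by ring)
  have hmeas : AEStronglyMeasurable (fun x => clarkeDeriv ψ (a x) (b x - c x)) μ :=
    (hψ.upperSemicontinuous_clarkeDeriv.measurable.comp_aemeasurable
      ((Lp.aestronglyMeasurable a).aemeasurable.prodMk
        ((Lp.aestronglyMeasurable b).sub
          (Lp.aestronglyMeasurable c)).aemeasurable)).aestronglyMeasurable
  refine ⟨hdom.mono' hmeas hle, ?_⟩
  have h1 : ∫ x, ‖(b - c) x‖ ∂μ ≤ √(μ.real Set.univ) * ‖b - c‖ := by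
    simpa using (memLp_const (1 : ℝ) (μ := μ) (p := 2)).integral_mul_norm_Lp_two_le (b - c)
  have h2 : ∫ x, ‖a x‖ * ‖(b - c) x‖ ∂μ ≤ ‖a‖ * ‖b - c‖ := by
    have h := (Lp.memLp a).norm.integral_mul_norm_Lp_two_le (b - c)
    simpa only [norm_norm, L2.integral_norm_sq_eq, Real.sqrt_sq (norm_nonneg a)] using h
  calc |∫ x, clarkeDeriv ψ (a x) (b x - c x) ∂μ|
      ≤ ∫ x, C * (‖(b - c) x‖ + ‖a x‖ * ‖(b - c) x‖) ∂μ :=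
        norm_integral_le_of_norm_le hdom hle
    _ = C * (∫ x, ‖(b - c) x‖ ∂μ + ∫ x, ‖a x‖ * ‖(b - c) x‖ ∂μ) := by
        rw [integral_const_mul, integral_add ((Lp.memLp (b - c)).integrable one_le_two).norm
          (L2.integrable_norm_mul_norm a (b - c))]
    _ ≤ C * (√(μ.real Set.univ) * ‖b - c‖ + ‖a‖ * ‖b - c‖) := by gcongr
    _ = C * (√(μ.real Set.univ) + ‖a‖) * ‖b - c‖ := by ring

/-- One-sided relaxed monotonicity of the Clarke derivative, integrated and combined with
subadditivity. -/
theorem LocallyLipschitz.integral_clarkeDeriv_add_le (hψ : LocallyLipschitz ψ) (hC0 : 0 ≤ C)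
    (hC : ∀ z w : E, |clarkeDeriv ψ z w| ≤ C * (1 + ‖z‖) * ‖w‖) {α : ℝ}
    (hmon : ∀ z₁ z₂ : E,
      clarkeDeriv ψ z₁ (z₂ - z₁) + clarkeDeriv ψ z₂ (z₁ - z₂) ≤ α * ‖z₁ - z₂‖ ^ 2)
    (a b c : Lp E 2 μ) :
    ∫ x, clarkeDeriv ψ (a x) (b x - a x) ∂μ + ∫ x, clarkeDeriv ψ (b x) (c x - b x) ∂μ ≤
      α * ‖a - b‖ ^ 2 + ∫ x, clarkeDeriv ψ (b x) (c x - a x) ∂μ := by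
  have hab := (hψ.integrable_clarkeDeriv_Lp hC0 hC a b a).1
  have hbc := (hψ.integrable_clarkeDeriv_Lp hC0 hC b c b).1
  have hbca := (hψ.integrable_clarkeDeriv_Lp hC0 hC b c a).1
  have hsq := (L2.integrable_norm_sq (a - b)).const_mul α
  rw [← L2.integral_norm_sq_eq, ← integral_const_mul, ← integral_add hab hbc,
    ← integral_add hsq hbca]
  refine integral_mono_ae (hab.add hbc) (hsq.add hbca) ?_
  filter_upwards [Lp.coeFn_sub a b] with x hx
  have h := hψ.clarkeDeriv_add_le (b x) (c x - a x) (a x - b x)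
  rw [sub_add_sub_cancel] at h
  simp only [hx, Pi.sub_apply]
  linarith [hmon (a x) (b x)]

end Integral

theorem stmt19 {V : Type*} [NormedAddCommGroup V] [InnerProductSpace ℝ V] [CompleteSpace V]
    {Δ : Type*} [MeasurableSpace Δ] (μ : Measure Δ) [IsFiniteMeasure μ]
    (m : ℕ) (hm : 1 ≤ m)
    (γψ : V →L[ℝ] (Lp (EuclideanSpace ℝ (Fin m)) 2 μ))
    (cΔ : ℝ) (hcΔ : 0 < cΔ) (hγ : ∀ v : V, ‖γψ v‖ ≤ cΔ * ‖v‖)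
    (ψ : EuclideanSpace ℝ (Fin m) → ℝ)
    (hψlip : ∀ z : EuclideanSpace ℝ (Fin m),
      ∃ (L : NNReal) (s : Set (EuclideanSpace ℝ (Fin m))), s ∈ 𝓝 z ∧ LipschitzOnWith L ψ s)
    (cψ : ℝ) (hcψ : 0 ≤ cψ)
    (hψgrowth : ∀ z ξ : EuclideanSpace ℝ (Fin m),
      (∀ w, ⟪ξ, w⟫ ≤ clarkeDeriv ψ z w) → ‖ξ‖ ≤ cψ * (1 + ‖z‖))
    (αψ : ℝ) (hαψ : 0 ≤ αψ)
    (hψmon : ∀ z₁ z₂ : EuclideanSpace ℝ (Fin m),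
      clarkeDeriv ψ z₁ (z₂ - z₁) + clarkeDeriv ψ z₂ (z₁ - z₂) ≤ αψ * ‖z₁ - z₂‖ ^ 2)
    (K : Set V) (hKne : K.Nonempty) (hKcl : IsClosed K) (hKcv : Convex ℝ K)
    (A : V → (V →L[ℝ] ℝ)) (LA : ℝ) (hLA : 0 < LA)
    (hALip : ∀ v₁ v₂ : V, ‖A v₁ - A v₂‖ ≤ LA * ‖v₁ - v₂‖)
    (mA : ℝ) (hmA : 0 < mA)
    (hAmon : ∀ v₁ v₂ : V, (A v₁ - A v₂) (v₁ - v₂) ≥ mA * ‖v₁ - v₂‖ ^ 2)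
    (Φ : V → ℝ) (hΦcv : ConvexOn ℝ Set.univ Φ) (hΦcont : Continuous Φ)
    (f : V →L[ℝ] ℝ) (hsmall : αψ * cΔ ^ 2 < mA)
    (u : V) (huK : u ∈ K)
    (hu : ∀ v ∈ K,
      (A u) (v - u) + Φ v - Φ u +
        (∫ x, clarkeDeriv ψ ((γψ u) x) ((γψ v) x - (γψ u) x) ∂μ) ≥ f (v - u))
    (R : V → V → ℝ)
    (hR : ∀ v w : V, R v w =
      (A u) (v - w) + Φ v - Φ w +
        (∫ x, clarkeDeriv ψ ((γψ u) x) ((γψ v) x - (γψ w) x) ∂μ) - f (v - w)) :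
    ∃ c > (0:ℝ), ∀ (Vh : Submodule ℝ V), FiniteDimensional ℝ Vh →
      ∀ (Kh : Set V), Kh.Nonempty → IsClosed Kh → Convex ℝ Kh → Kh ⊆ (Vh : Set V) →
      Kh ⊆ K →
      ∀ uh : V, uh ∈ Kh →
      (∀ vh ∈ Kh,
        (A uh) (vh - uh) + Φ vh - Φ uh +
          (∫ x, clarkeDeriv ψ ((γψ uh) x) ((γψ vh) x - (γψ uh) x) ∂μ) ≥ f (vh - uh)) →
      ∀ vh ∈ Kh,
        ‖u - uh‖ ^ 2 ≤ c * (‖u - vh‖ ^ 2 + ‖γψ (u - vh)‖ + R vh u) := by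
  have hψ : LocallyLipschitz ψ := hψlip
  have hC : ∀ z w : EuclideanSpace ℝ (Fin m),
      |clarkeDeriv ψ z w| ≤ cψ * (1 + ‖z‖) * ‖w‖ :=
    fun z w => hψ.abs_clarkeDeriv_le_of_subgradient_le (hψgrowth z) w
  set δ := mA - αψ * cΔ ^ 2 with hδ
  have hδpos : 0 < δ := sub_pos.2 hsmall
  set M := √(μ.real Set.univ) + ‖γψ u‖ with hM
  have hM0 : 0 ≤ M := by positivity
  set B := LA + cψ * cΔ ^ 2 with hB
  set S := B ^ 2 / (2 * δ) + 2 * cψ * M + 1 with hS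
  have hq : 0 ≤ B ^ 2 / (2 * δ) := by positivity
  have hr : 0 ≤ 2 * cψ * M := by positivity
  refine ⟨2 / δ * S, by positivity, ?_⟩
  intro Vh _ Kh _ _ _ _ hKhK uh huh hdisc vh hvh
  have hcont := hu uh (hKhK huh)
  have hR0 : 0 ≤ R vh u := by
    rw [hR]
    linarith [hu vh (hKhK hvh)]
  have hdv := hdisc vh hvh
  have hRv := hR vh u
  have hψsum := hψ.integral_clarkeDeriv_add_le hcψ hC hψmon (γψ u) (γψ uh) (γψ vh)
  have hIu := (abs_le.1 (hψ.integrable_clarkeDeriv_Lp hcψ hC (γψ u) (γψ vh) (γψ u)).2).1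
  have hIuh := (abs_le.1 (hψ.integrable_clarkeDeriv_Lp hcψ hC (γψ uh) (γψ vh) (γψ u)).2).2
  rw [norm_sub_rev (γψ vh), ← map_sub] at hIu hIuh
  rw [← map_sub] at hψsum
  have hmono := hAmon u uh
  have hAbound : (A uh - A u) (vh - u) ≤ LA * ‖u - uh‖ * ‖u - vh‖ := by
    have h := (le_abs_self _).trans ((A uh - A u).le_opNorm (vh - u))
    rw [norm_sub_rev vh u] at h
    refine h.trans (mul_le_mul_of_nonneg_right ?_ (norm_nonneg _))
    rw [norm_sub_rev u uh]
    exact hALip uh u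
  have hγe := hγ (u - uh)
  have hγd := hγ (u - vh)
  have hγuh : ‖γψ uh‖ ≤ ‖γψ u‖ + cΔ * ‖u - uh‖ := by
    have h := norm_sub_le (γψ u) (γψ (u - uh))
    rw [map_sub, sub_sub_cancel, ← map_sub] at h
    linarith
  simp only [map_sub, sub_apply] at hmono hAbound hcont hdv hRv
  set e := ‖u - uh‖ with he
  set d := ‖u - vh‖ with hd
  set g := ‖γψ (u - vh)‖ with hg
  have he0 : 0 ≤ e := norm_nonneg _
  have hd0 : 0 ≤ d := norm_nonneg _
  have hg0 : 0 ≤ g := norm_nonneg _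
  have hquad : αψ * ‖γψ (u - uh)‖ ^ 2 ≤ αψ * cΔ ^ 2 * e ^ 2 := by
    rw [mul_assoc, ← mul_pow]
    gcongr
  have hIuh' : cψ * (√(μ.real Set.univ) + ‖γψ uh‖) * g ≤
      cψ * M * g + cψ * cΔ ^ 2 * (e * d) := by
    calc cψ * (√(μ.real Set.univ) + ‖γψ uh‖) * g
        ≤ cψ * (√(μ.real Set.univ) + (‖γψ u‖ + cΔ * e)) * g := by gcongr
      _ = cψ * M * g + cψ * cΔ * e * g := by rw [hM]; ring
      _ ≤ cψ * M * g + cψ * cΔ * e * (cΔ * d) := by gcongr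
      _ = cψ * M * g + cψ * cΔ ^ 2 * (e * d) := by ring
  have hmain : δ * e ^ 2 ≤ B * (e * d) + 2 * cψ * M * g + R vh u := by
    rw [hδ, hB]
    linarith
  have hyoung : B * (e * d) ≤ δ / 2 * e ^ 2 + B ^ 2 / (2 * δ) * d ^ 2 := by
    have h : δ / 2 * e ^ 2 + B ^ 2 / (2 * δ) * d ^ 2 - B * (e * d) =
        (δ * e - B * d) ^ 2 / (2 * δ) := by
      field_simp
      ring
    have : 0 ≤ (δ * e - B * d) ^ 2 / (2 * δ) := by positivity
    linarith
  have hsum : δ / 2 * e ^ 2 ≤ S * (d ^ 2 + g + R vh u) := by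
    have h1 : B ^ 2 / (2 * δ) * d ^ 2 ≤ S * d ^ 2 :=
      mul_le_mul_of_nonneg_right (by linarith) (sq_nonneg d)
    have h2 : 2 * cψ * M * g ≤ S * g := mul_le_mul_of_nonneg_right (by linarith) hg0
    have h3 : 1 * R vh u ≤ S * R vh u := mul_le_mul_of_nonneg_right (by linarith) hR0
    linarith
  calc e ^ 2 = 2 / δ * (δ / 2 * e ^ 2) := by field_simp
    _ ≤ 2 / δ * (S * (d ^ 2 + g + R vh u)) := by gcongr
    _ = 2 / δ * S * (d ^ 2 + g + R vh u) := by ring
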